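/- For every η ∈ (0,1) and q ∈ [2,∞) there exists a constant K = K(η,q) ∈ (0,∞) with the following property. If (X,‖·‖_X) is a Banach space satisfying δ_X(ε) ≥ (ηε)^q for every ε ∈ (0,1), then for every integer n ≥ 2 the bi-Lipschitz distortion of the ball B_n satisfies c_X(B_n, d_W) ≥ K (log n)^{1/q}; equivalently, if D ≥ 1 and f : B_n → X satisfies d_W(x,y) ≤ ‖f(x)−f(y)‖_X ≤ D·d_W(x,y) for all x,y ∈ B_n, then D ≥ K (log n)^{1/q}. -/

import Mathlib

/-- The discrete Heisenberg group, as ℤ³ with the Heisenberg multiplication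
(equivalently, unit upper-triangular 3×3 integer matrices). -/
@[ext]
structure DH where
  x : ℤ
  y : ℤ
  z : ℤ

namespace DH

instance : Mul DH := ⟨fun a b => ⟨a.x + b.x, a.y + b.y, a.z + b.z + a.x * b.y⟩⟩
instance : One DH := ⟨⟨0, 0, 0⟩⟩
instance : Inv DH := ⟨fun a => ⟨-a.x, -a.y, -a.z + a.x * a.y⟩⟩

lemma mul_def (a b : DH) : a * b = ⟨a.x + b.x, a.y + b.y, a.z + b.z + a.x * b.y⟩ := rfl
lemma one_def : (1 : DH) = ⟨0, 0, 0⟩ := rfl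
lemma inv_def (a : DH) : a⁻¹ = ⟨-a.x, -a.y, -a.z + a.x * a.y⟩ := rfl

instance : Group DH where
  mul_assoc a b c := by
    simp only [mul_def, mk.injEq]
    refine ⟨by ring, by ring, by ring⟩
  one_mul a := by simp [mul_def, one_def]
  mul_one a := by simp [mul_def, one_def]
  inv_mul_cancel a := by
    simp only [mul_def, inv_def, one_def, mk.injEq]
    refine ⟨by ring, by ring, by ring⟩

/-- The generator `a`. -/
def gA : DH := ⟨1, 0, 0⟩

/-- The generator `b`. -/
def gB : DH := ⟨0, 1, 0⟩

/-- The commutator `c = aba⁻¹b⁻¹`, a generator of the center. -/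
def gC : DH := gA * gB * gA⁻¹ * gB⁻¹

/-- Word length with respect to the symmetric generating set `{a, b, a⁻¹, b⁻¹}`. -/
noncomputable def wordLen (g : DH) : ℕ :=
  sInf {n | ∃ l : List DH, l.length = n ∧
    (∀ s ∈ l, s ∈ ({gA, gB, gA⁻¹, gB⁻¹} : Set DH)) ∧ l.prod = g}

/-- The left-invariant word metric on the discrete Heisenberg group. -/
noncomputable def dW (g h : DH) : ℕ := wordLen (g⁻¹ * h)

/-- The closed ball of radius `n` centered at the identity. -/
def Ball (n : ℕ) : Set DH := {g | dW g 1 ≤ n}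

end DH

section Averages

variable {E : Type*} [NormedAddCommGroup E] [NormedSpace ℝ E]

/-- The average `2⁻ᵏ ∑_{i < 2ᵏ} Tⁱ`, in product form. -/
noncomputable def dyadicAvg (T : Module.End ℝ E) : ℕ → Module.End ℝ E
  | 0 => 1
  | k + 1 => (1 / 2 : ℝ) • ((1 + T ^ 2 ^ k) * dyadicAvg T k)

lemma commute_dyadicAvg {T S : Module.End ℝ E} (h : Commute S T) (k : ℕ) :
    Commute S (dyadicAvg T k) := by
  induction k with
  | zero => exact Commute.one_right S
  | succ k ih =>
    exact Commute.smul_right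
      (Commute.mul_right (Commute.add_right (Commute.one_right S) (h.pow_right _)) ih) _

lemma dyadicAvg_mul_one_sub (T : Module.End ℝ E) (k : ℕ) :
    dyadicAvg T k * (1 - T) = (1 / 2 : ℝ) ^ k • (1 - T ^ 2 ^ k) := by
  induction k with
  | zero => simp [dyadicAvg]
  | succ k ih =>
    rw [dyadicAvg, smul_mul_assoc, mul_assoc, ih, mul_smul_comm, smul_smul, pow_succ, pow_succ,
      pow_mul, mul_comm ((1 / 2 : ℝ) ^ k)]
    congr 1
    noncomm_ring

lemma norm_pow_apply {T : Module.End ℝ E} (hT : ∀ u, ‖T u‖ = ‖u‖) (m : ℕ) (u : E) :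
    ‖(T ^ m) u‖ = ‖u‖ := by
  induction m with
  | zero => simp
  | succ m ih => rw [pow_succ', Module.End.mul_apply, hT, ih]

lemma norm_sub_pow_le {T : Module.End ℝ E} (hT : ∀ u, ‖T u‖ = ‖u‖) (m : ℕ) (u : E) :
    ‖u - (T ^ m) u‖ ≤ m * ‖u - T u‖ := by
  induction m with
  | zero => simp
  | succ m ih =>
    have h : u - (T ^ (m + 1)) u = (u - (T ^ m) u) + (T ^ m) (u - T u) := by
      rw [pow_succ, Module.End.mul_apply, map_sub]; abel
    rw [h]
    refine (norm_add_le _ _).trans ?_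
    rw [norm_pow_apply hT]
    push_cast
    linarith

lemma norm_dyadicAvg_le {T : Module.End ℝ E} (hT : ∀ u, ‖T u‖ = ‖u‖) (k : ℕ) (u : E) :
    ‖dyadicAvg T k u‖ ≤ ‖u‖ := by
  induction k with
  | zero => simp [dyadicAvg]
  | succ k ih =>
    have h := norm_add_le (dyadicAvg T k u) ((T ^ 2 ^ k) (dyadicAvg T k u))
    rw [norm_pow_apply hT] at h
    simp only [dyadicAvg, LinearMap.smul_apply, Module.End.mul_apply, LinearMap.add_apply,
      Module.End.one_apply, norm_smul]
    norm_num
    linarith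

lemma norm_sub_dyadicAvg_succ_le {T : Module.End ℝ E} (hT : ∀ u, ‖T u‖ = ‖u‖) (k : ℕ) (u : E) :
    ‖u - dyadicAvg T (k + 1) u‖ ≤ ‖u - dyadicAvg T k u‖ + ‖u - (T ^ 2 ^ k) u‖ := by
  have hc : (T ^ 2 ^ k) (dyadicAvg T k u) = dyadicAvg T k ((T ^ 2 ^ k) u) :=
    LinearMap.congr_fun (commute_dyadicAvg ((Commute.refl T).pow_left _) k).eq u
  have h : u - dyadicAvg T (k + 1) u
      = (u - dyadicAvg T k u) + (1 / 2 : ℝ) • dyadicAvg T k (u - (T ^ 2 ^ k) u) := by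
    simp only [dyadicAvg, LinearMap.smul_apply, Module.End.mul_apply, LinearMap.add_apply,
      Module.End.one_apply, hc, map_sub]
    module
  rw [h]
  refine (norm_add_le _ _).trans ?_
  have := norm_dyadicAvg_le hT k (u - (T ^ 2 ^ k) u)
  rw [norm_smul, Real.norm_of_nonneg (by norm_num)]
  linarith [norm_nonneg (u - (T ^ 2 ^ k) u)]

lemma norm_sub_dyadicAvg_le_sum {T : Module.End ℝ E} (hT : ∀ u, ‖T u‖ = ‖u‖) (k : ℕ) (u : E) :
    ‖u - dyadicAvg T k u‖ ≤ ∑ l ∈ Finset.range k, ‖u - (T ^ 2 ^ l) u‖ := by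
  induction k with
  | zero => simp [dyadicAvg]
  | succ k ih =>
    rw [Finset.sum_range_succ]
    linarith [norm_sub_dyadicAvg_succ_le hT k u]

lemma norm_sub_dyadicAvg_le {T : Module.End ℝ E} (hT : ∀ u, ‖T u‖ = ‖u‖) (k : ℕ) (u : E) :
    ‖u - dyadicAvg T k u‖ ≤ 2 ^ k * ‖u - T u‖ := by
  induction k with
  | zero => simp [dyadicAvg]
  | succ k ih =>
    have h := norm_sub_dyadicAvg_succ_le hT k u
    have h' := norm_sub_pow_le hT (2 ^ k) u
    push_cast at h'
    rw [pow_succ]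
    linarith

/-- A vertical increment at scale `2 ^ (m + s)` is bounded by the increments at scales below
`2 ^ m`, the second difference of the averaged vector at scale `2 ^ m`, and a small multiple of
an increment at scale `2 ^ (m + t)`. -/
lemma norm_sub_pow_two_pow_le {T : Module.End ℝ E} (hT : ∀ u, ‖T u‖ = ‖u‖) (m s t : ℕ) (u : E)
    {v : E} (hv : v = dyadicAvg T m (u - (T ^ 2 ^ m) u)) :
    ‖u - (T ^ 2 ^ (m + s)) u‖ ≤ 2 * ∑ l ∈ Finset.range m, ‖u - (T ^ 2 ^ l) u‖
      + 2 ^ s * (2 ^ t * ‖v - (T ^ 2 ^ m) v‖ + (1 / 2) ^ t * ‖u - (T ^ 2 ^ (m + t)) u‖) := by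
  have hU : ∀ u, ‖(T ^ 2 ^ m) u‖ = ‖u‖ := norm_pow_apply hT _
  have hc : ∀ i w, (T ^ i) (dyadicAvg T m w) = dyadicAvg T m ((T ^ i) w) := fun i w =>
    LinearMap.congr_fun (commute_dyadicAvg ((Commute.refl T).pow_left i) m).eq w
  have hsmall : ‖v‖ ≤ 2 ^ t * ‖v - (T ^ 2 ^ m) v‖
      + (1 / 2) ^ t * ‖u - (T ^ 2 ^ (m + t)) u‖ := by
    have h1 := norm_sub_dyadicAvg_le hU t v
    have h2 : dyadicAvg (T ^ 2 ^ m) t v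
        = (1 / 2 : ℝ) ^ t • dyadicAvg T m (u - (T ^ 2 ^ (m + t)) u) := by
      have h3 := LinearMap.congr_fun (dyadicAvg_mul_one_sub (T ^ 2 ^ m) t) (dyadicAvg T m u)
      simp only [Module.End.mul_apply, LinearMap.sub_apply, LinearMap.smul_apply,
        Module.End.one_apply, hc, ← pow_mul, ← pow_add, ← map_sub] at h3
      rw [hv, h3]
    have h4 : ‖dyadicAvg (T ^ 2 ^ m) t v‖ ≤ (1 / 2) ^ t * ‖u - (T ^ 2 ^ (m + t)) u‖ := by
      rw [h2, norm_smul, Real.norm_of_nonneg (by positivity)]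
      gcongr
      exact norm_dyadicAvg_le hT m _
    have h5 := norm_add_le (v - dyadicAvg (T ^ 2 ^ m) t v) (dyadicAvg (T ^ 2 ^ m) t v)
    rw [sub_add_cancel] at h5
    linarith
  have hbig : ‖dyadicAvg T m u - (T ^ 2 ^ (m + s)) (dyadicAvg T m u)‖ ≤ 2 ^ s * ‖v‖ := by
    have h1 := norm_sub_pow_le hU (2 ^ s) (dyadicAvg T m u)
    rw [← pow_mul, ← pow_add, hc (2 ^ m), ← map_sub, ← hv] at h1
    push_cast at h1
    exact h1
  have hdec : u - (T ^ 2 ^ (m + s)) u = ((u - dyadicAvg T m u)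
      - (T ^ 2 ^ (m + s)) (u - dyadicAvg T m u))
      + (dyadicAvg T m u - (T ^ 2 ^ (m + s)) (dyadicAvg T m u)) := by
    rw [map_sub]; abel
  have h6 := norm_sub_le (u - dyadicAvg T m u) ((T ^ 2 ^ (m + s)) (u - dyadicAvg T m u))
  rw [norm_pow_apply hT] at h6
  have h7 := norm_sub_dyadicAvg_le_sum hT m u
  rw [hdec]
  refine (norm_add_le _ _).trans ?_
  have h8 := mul_le_mul_of_nonneg_left hsmall (by positivity : (0 : ℝ) ≤ 2 ^ s)
  linarith

/-- Two-point form of `q`-uniform convexity with constant `κ`. -/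
def TwoPointConvex (E : Type*) [NormedAddCommGroup E] [NormedSpace ℝ E] (q κ : ℝ) : Prop :=
  ∀ u v : E, ‖(1 / 2 : ℝ) • (u + v)‖ ^ q + κ * ‖u - v‖ ^ q ≤ (‖u‖ ^ q + ‖v‖ ^ q) / 2

lemma TwoPointConvex.sum_norm_dyadicAvg_le {q κ : ℝ} (hE : TwoPointConvex E q κ)
    {T : Module.End ℝ E} (hT : ∀ u, ‖T u‖ = ‖u‖) (J : ℕ) (u : E) :
    κ * ∑ k ∈ Finset.range J, ‖dyadicAvg T k (u - (T ^ 2 ^ k) u)‖ ^ q ≤ ‖u‖ ^ q := by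
  suffices h : κ * ∑ k ∈ Finset.range J, ‖dyadicAvg T k (u - (T ^ 2 ^ k) u)‖ ^ q
      + ‖dyadicAvg T J u‖ ^ q ≤ ‖u‖ ^ q from
    (le_add_of_nonneg_right (Real.rpow_nonneg (norm_nonneg _) _)).trans h
  induction J with
  | zero => simp [dyadicAvg]
  | succ J ih =>
    have h := hE (dyadicAvg T J u) ((T ^ 2 ^ J) (dyadicAvg T J u))
    rw [norm_pow_apply hT] at h
    have hc : (T ^ 2 ^ J) (dyadicAvg T J u) = dyadicAvg T J ((T ^ 2 ^ J) u) :=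
      LinearMap.congr_fun (commute_dyadicAvg ((Commute.refl T).pow_left _) J).eq u
    have h' : dyadicAvg T (J + 1) u
        = (1 / 2 : ℝ) • (dyadicAvg T J u + (T ^ 2 ^ J) (dyadicAvg T J u)) := by
      simp [dyadicAvg]
    rw [← h', hc, ← map_sub] at h
    rw [Finset.sum_range_succ, mul_add]
    linarith

end Averages

section UniformConvexity

lemma rpow_half_add_add_rpow_half_sub_le {a b q : ℝ} (hq : 2 ≤ q) (hb : 0 ≤ b) (hab : b ≤ a) :
    ((a + b) / 2) ^ q + ((a - b) / 2) ^ q ≤ (a ^ q + b ^ q) / 2 := by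
  have hsq : ∀ x : ℝ, 0 ≤ x → x ^ q = (x ^ 2) ^ (q / 2) := fun x hx => by
    rw [← Real.rpow_natCast, ← Real.rpow_mul hx]; congr 1; push_cast; ring
  have h1 := Real.add_rpow_le_rpow_add (sq_nonneg ((a + b) / 2)) (sq_nonneg ((a - b) / 2))
    (by linarith : (1 : ℝ) ≤ q / 2)
  have h2 := (convexOn_rpow (by linarith : (1 : ℝ) ≤ q / 2)).2 (sq_nonneg a) (sq_nonneg b)
    (by norm_num : (0 : ℝ) ≤ 1 / 2) (by norm_num : (0 : ℝ) ≤ 1 / 2) (by norm_num)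
  simp only [smul_eq_mul] at h2
  rw [hsq _ (by linarith), hsq _ (by linarith : 0 ≤ (a - b) / 2), hsq a (by linarith), hsq b hb]
  have h3 : ((a + b) / 2) ^ 2 + ((a - b) / 2) ^ 2 = 1 / 2 * a ^ 2 + 1 / 2 * b ^ 2 := by ring
  rw [h3] at h1
  linarith

variable {X : Type*} [NormedAddCommGroup X] [NormedSpace ℝ X]

lemma twoPointConvex_aux {η q : ℝ} (hη : η ∈ Set.Ioo (0 : ℝ) 1) (hq : 2 ≤ q)
    (hX : ∀ ε ∈ Set.Ioo (0 : ℝ) 1, ∀ x y : X, ‖x‖ = 1 → ‖y‖ = 1 → ε ≤ ‖x - y‖ →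
      ‖x + y‖ ≤ 2 * (1 - (η * ε) ^ q)) {u v : X} (hu : ‖u‖ = 1) (hv : ‖v‖ ≤ 1) :
    ‖(1 / 2 : ℝ) • (u + v)‖ ^ q + (η / 8) ^ q * ‖u - v‖ ^ q ≤ (‖u‖ ^ q + ‖v‖ ^ q) / 2 := by
  obtain ⟨hη0, hη1⟩ := hη
  set r := ‖v‖ with hr
  set d := ‖u - v‖ with hd
  have hr0 : 0 ≤ r := norm_nonneg _
  have hd0 : 0 ≤ d := norm_nonneg _
  have hd2 : d ≤ 1 + r := hu ▸ norm_sub_le u v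
  have hscalar := rpow_half_add_add_rpow_half_sub_le hq hr0 hv
  rw [← Real.mul_rpow (by positivity) hd0, hu]
  rcases le_or_gt (d / 4) (1 - r) with hcase | hcase
  · have h1 : ‖(1 / 2 : ℝ) • (u + v)‖ ≤ (1 + r) / 2 := by
      have := norm_add_le u v
      rw [norm_smul, Real.norm_of_nonneg (by norm_num)]
      linarith
    have h2 : η / 8 * d ≤ (1 - r) / 2 := by nlinarith
    have h3 := Real.rpow_le_rpow (norm_nonneg _) h1 (by linarith : 0 ≤ q)
    have h4 := Real.rpow_le_rpow (by positivity) h2 (by linarith : 0 ≤ q)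
    linarith
  · have hrhalf : 1 / 2 ≤ r := by linarith
    have hrpos : 0 < r := by linarith
    have hdpos : 0 < d := by linarith
    set w := r⁻¹ • v with hw
    have hvw : v = r • w := by rw [hw, smul_inv_smul₀ hrpos.ne']
    have hwn : ‖w‖ = 1 := by
      rw [hw, norm_smul, norm_inv, Real.norm_of_nonneg hr0, ← hr, inv_mul_cancel₀ hrpos.ne']
    have hwd : 3 * d / 8 ≤ ‖u - w‖ := by
      have h1 : u - v = (u - w) + (1 - r) • w := by rw [hvw]; module
      have h2 := norm_add_le (u - w) ((1 - r) • w)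
      rw [← h1, norm_smul, hwn, Real.norm_of_nonneg (by linarith), ← hd] at h2
      linarith
    have huw := hX (3 * d / 8) ⟨by linarith, by linarith⟩ u w hu hwn hwd
    set θ := (η * (3 * d / 8)) ^ q with hθ
    have hθ0 : 0 ≤ θ := by positivity
    set M := (1 + r) / 2 with hM
    have hnorm : ‖(1 / 2 : ℝ) • (u + v)‖ ≤ M - r * θ := by
      have h1 : (1 / 2 : ℝ) • (u + v) = ((1 - r) / 2) • u + (r / 2) • (u + w) := by
        rw [hvw]; module
      rw [h1]
      refine (norm_add_le _ _).trans ?_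
      rw [norm_smul, norm_smul, hu, Real.norm_of_nonneg (by linarith),
        Real.norm_of_nonneg (by linarith)]
      nlinarith
    have hMpos : 3 / 4 ≤ M := by linarith
    have hMle : M ≤ 1 := by linarith
    have h1 := Real.rpow_le_rpow (norm_nonneg _) hnorm (by linarith : 0 ≤ q)
    have h2 : (M - r * θ) ^ q ≤ M ^ q - M ^ q * (r * θ) := by
      have h0 : 0 ≤ M - r * θ := (norm_nonneg _).trans hnorm
      have e : ∀ x : ℝ, 0 ≤ x → x ^ q = x ^ (q - 1) * x := fun x hx => by
        conv_rhs => rw [← Real.rpow_one x, ← Real.rpow_mul hx, one_mul]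
        rw [← Real.rpow_add_of_nonneg hx (by linarith) zero_le_one]; congr 1; ring
      have h3 : (M - r * θ) ^ (q - 1) ≤ M ^ (q - 1) :=
        Real.rpow_le_rpow h0 (by nlinarith) (by linarith)
      have h4 : M ^ q ≤ M ^ (q - 1) :=
        Real.rpow_le_rpow_of_exponent_ge (by linarith) hMle (by linarith)
      have h5 : (M - r * θ) ^ q ≤ M ^ (q - 1) * (M - r * θ) := by
        rw [e _ h0]; exact mul_le_mul_of_nonneg_right h3 h0
      have h6 := mul_le_mul_of_nonneg_right h4 (by positivity : 0 ≤ r * θ)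
      have h7 := e M (by linarith)
      linarith
    have h3 : (η / 8 * d) ^ q ≤ M ^ q * (r * θ) := by
      have h4 : (3 / 4 : ℝ) ^ q ≤ M ^ q := Real.rpow_le_rpow (by norm_num) hMpos (by linarith)
      have h5 : θ = 3 ^ q * (η / 8 * d) ^ q := by
        rw [hθ, ← Real.mul_rpow (by norm_num) (by positivity)]; congr 1; ring
      have h6 : (9 / 4 : ℝ) ≤ (3 / 4) ^ q * 3 ^ q := by
        rw [← Real.mul_rpow (by norm_num) (by norm_num)]
        have := Real.rpow_le_rpow_of_exponent_le (by norm_num : (1 : ℝ) ≤ 9 / 4)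
          (by linarith : (1 : ℝ) ≤ q)
        rw [Real.rpow_one] at this
        norm_num
        exact this
      have h7 : 0 ≤ (η / 8 * d) ^ q := by positivity
      calc (η / 8 * d) ^ q ≤ (9 / 4) * (1 / 2 * (η / 8 * d) ^ q) := by linarith
        _ ≤ ((3 / 4) ^ q * 3 ^ q) * (r * (η / 8 * d) ^ q) := by gcongr
        _ = (3 / 4) ^ q * (r * θ) := by rw [h5]; ring
        _ ≤ M ^ q * (r * θ) := by gcongr
    have h8 : M ^ q ≤ (1 ^ q + r ^ q) / 2 := by
      have : 0 ≤ ((1 - r) / 2) ^ q := Real.rpow_nonneg (by linarith) _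
      linarith
    linarith

/-- A modulus of uniform convexity of power type `q` gives the two-point inequality. -/
lemma twoPointConvex_of_modulus {η q : ℝ} (hη : η ∈ Set.Ioo (0 : ℝ) 1) (hq : 2 ≤ q)
    (hX : ∀ ε ∈ Set.Ioo (0 : ℝ) 1, ∀ x y : X, ‖x‖ = 1 → ‖y‖ = 1 → ε ≤ ‖x - y‖ →
      ‖x + y‖ ≤ 2 * (1 - (η * ε) ^ q)) : TwoPointConvex X q ((η / 8) ^ q) := by
  have key : ∀ u v : X, ‖v‖ ≤ ‖u‖ →
      ‖(1 / 2 : ℝ) • (u + v)‖ ^ q + (η / 8) ^ q * ‖u - v‖ ^ q ≤ (‖u‖ ^ q + ‖v‖ ^ q) / 2 := by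
    intro u v huv
    rcases (norm_nonneg u).eq_or_lt with h0 | h0
    · have hu : u = 0 := norm_eq_zero.1 h0.symm
      have hv : v = 0 := norm_eq_zero.1 (le_antisymm (h0 ▸ huv) (norm_nonneg _))
      have : q ≠ 0 := by linarith
      simp [hu, hv, Real.zero_rpow this]
    · set r := ‖u‖ with hr
      have hn : ∀ w : X, ‖w‖ ^ q = r ^ q * ‖r⁻¹ • w‖ ^ q := fun w => by
        rw [← Real.mul_rpow h0.le (norm_nonneg _), norm_smul, norm_inv, Real.norm_of_nonneg h0.le,
          mul_inv_cancel_left₀ h0.ne']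
      have h := twoPointConvex_aux hη hq hX (u := r⁻¹ • u) (v := r⁻¹ • v)
        (by rw [norm_smul, norm_inv, Real.norm_of_nonneg h0.le, ← hr, inv_mul_cancel₀ h0.ne'])
        (by rw [norm_smul, norm_inv, Real.norm_of_nonneg h0.le, inv_mul_le_iff₀ h0]; linarith)
      have hrq : 0 < r ^ q := Real.rpow_pos_of_pos h0 q
      rw [← smul_add, ← smul_sub, smul_comm] at h
      rw [hr, hn u, hn v, hn (u - v), hn ((1 / 2 : ℝ) • (u + v))]
      nlinarith
  intro u v
  rcases le_total ‖v‖ ‖u‖ with h | h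
  · exact key u v h
  · have := key v u h
    rwa [add_comm v u, norm_sub_rev, add_comm (‖v‖ ^ q)] at this

end UniformConvexity

namespace DH

/-- `g` is a product of `n` letters. -/
def IsWord (g : DH) (n : ℕ) : Prop :=
  ∃ l : List DH, l.length = n ∧ (∀ s ∈ l, s ∈ ({gA, gB, gA⁻¹, gB⁻¹} : Set DH)) ∧ l.prod = g

lemma IsWord.wordLen_le {g : DH} {n : ℕ} (h : IsWord g n) : wordLen g ≤ n := Nat.sInf_le h

lemma isWord_one : IsWord 1 0 := ⟨[], rfl, by simp, rfl⟩

lemma isWord_letter {s : DH} (hs : s ∈ ({gA, gB, gA⁻¹, gB⁻¹} : Set DH)) : IsWord s 1 :=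
  ⟨[s], rfl, by simpa using hs, by simp⟩

lemma IsWord.mul {g h : DH} {m n : ℕ} (hg : IsWord g m) (hh : IsWord h n) :
    IsWord (g * h) (m + n) := by
  obtain ⟨l, rfl, hl, rfl⟩ := hg
  obtain ⟨k, rfl, hk, rfl⟩ := hh
  refine ⟨l ++ k, by simp, fun s hs => ?_, by simp⟩
  rcases List.mem_append.1 hs with h | h
  exacts [hl s h, hk s h]

lemma IsWord.pow {g : DH} {m : ℕ} (hg : IsWord g m) (r : ℕ) : IsWord (g ^ r) (r * m) := by
  induction r with
  | zero => simpa using isWord_one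
  | succ r ih => rw [pow_succ, Nat.succ_mul]; exact ih.mul hg

lemma IsWord.inv {g : DH} {m : ℕ} (hg : IsWord g m) : IsWord g⁻¹ m := by
  obtain ⟨l, rfl, hl, rfl⟩ := hg
  refine ⟨(l.map (·⁻¹)).reverse, by simp, fun s hs => ?_, (List.prod_inv_reverse l).symm⟩
  simp only [List.mem_reverse, List.mem_map] at hs
  obtain ⟨t, ht, rfl⟩ := hs
  have := hl t ht
  simp only [Set.mem_insert_iff, Set.mem_singleton_iff, inv_inj] at this ⊢
  rcases this with rfl | rfl | rfl | rfl <;> simp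

lemma isWord_gA : IsWord gA 1 := isWord_letter (by simp)

lemma isWord_gB : IsWord gB 1 := isWord_letter (by simp)

lemma gA_pow (r : ℕ) : gA ^ r = ⟨r, 0, 0⟩ := by
  induction r with
  | zero => rfl
  | succ r ih => rw [pow_succ, ih]; simp [mul_def, gA]

lemma gB_pow (r : ℕ) : gB ^ r = ⟨0, r, 0⟩ := by
  induction r with
  | zero => rfl
  | succ r ih => rw [pow_succ, ih]; simp [mul_def, gB]

lemma gC_eq : gC = ⟨0, 0, 1⟩ := by
  simp [gC, mul_def, gA, gB, inv_def]

lemma gC_pow (r : ℕ) : gC ^ r = ⟨0, 0, r⟩ := by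
  induction r with
  | zero => rfl
  | succ r ih => rw [pow_succ, ih]; simp [mul_def, gC_eq]

lemma commute_gC (g : DH) : Commute g gC := by
  ext <;> simp [mul_def, gC_eq, add_comm]

lemma isWord_gC_pow_sq (r : ℕ) : IsWord (gC ^ r ^ 2) (4 * r) := by
  have h : gC ^ r ^ 2 = gA ^ r * gB ^ r * (gA ^ r)⁻¹ * (gB ^ r)⁻¹ := by
    rw [gC_pow, gA_pow, gB_pow]
    simp [mul_def, inv_def, pow_two]
  rw [h]
  have hA := isWord_gA.pow r
  have hB := isWord_gB.pow r
  have := ((hA.mul hB).mul hA.inv).mul hB.inv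
  convert this using 1
  ring

lemma exists_isWord_gC_pow (m : ℕ) : ∃ k, IsWord (gC ^ m) k ∧ k ≤ 16 * Nat.sqrt m := by
  obtain ⟨a, b, c, d, h⟩ := Nat.sum_four_squares m
  refine ⟨4 * a + 4 * b + 4 * c + 4 * d, ?_, ?_⟩
  · rw [← h, pow_add, pow_add, pow_add]
    exact (((isWord_gC_pow_sq a).mul (isWord_gC_pow_sq b)).mul (isWord_gC_pow_sq c)).mul
      (isWord_gC_pow_sq d)
  · have ha : a ≤ Nat.sqrt m := Nat.le_sqrt'.2 (by omega)
    have hb : b ≤ Nat.sqrt m := Nat.le_sqrt'.2 (by omega)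
    have hc : c ≤ Nat.sqrt m := Nat.le_sqrt'.2 (by omega)
    have hd : d ≤ Nat.sqrt m := Nat.le_sqrt'.2 (by omega)
    omega

lemma wordLen_gC_pow_le (m : ℕ) : wordLen (gC ^ m) ≤ 16 * Nat.sqrt m := by
  obtain ⟨k, hk, hkm⟩ := exists_isWord_gC_pow m
  exact hk.wordLen_le.trans hkm

lemma eq_gB_zpow_mul (g : DH) : g = gB ^ g.y * gA ^ g.x * gC ^ g.z := by
  have hA : ∀ x : ℤ, gA ^ x = ⟨x, 0, 0⟩ := fun x => by
    obtain ⟨n, rfl | rfl⟩ := x.eq_nat_or_neg <;> simp [gA_pow, inv_def]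
  have hB : ∀ x : ℤ, gB ^ x = ⟨0, x, 0⟩ := fun x => by
    obtain ⟨n, rfl | rfl⟩ := x.eq_nat_or_neg <;> simp [gB_pow, inv_def]
  have hC : ∀ x : ℤ, gC ^ x = ⟨0, 0, x⟩ := fun x => by
    obtain ⟨n, rfl | rfl⟩ := x.eq_nat_or_neg <;> simp [gC_pow, inv_def]
  rw [hA, hB, hC]
  ext <;> simp [mul_def]

lemma IsWord.zpow_of_natAbs {g : DH} {k : ℕ} (x : ℤ) (h : IsWord (g ^ x.natAbs) k) :
    IsWord (g ^ x) k := by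
  rcases Int.natAbs_eq x with hx | hx
  · rw [hx, zpow_natCast]; exact h
  · rw [hx, zpow_neg, zpow_natCast]; exact h.inv

lemma exists_isWord (g : DH) :
    ∃ k, IsWord g k ∧ k ≤ g.y.natAbs + g.x.natAbs + 16 * Nat.sqrt g.z.natAbs := by
  obtain ⟨k, hk, hkz⟩ := exists_isWord_gC_pow g.z.natAbs
  have hy : IsWord (gB ^ g.y) g.y.natAbs := .zpow_of_natAbs _ (by simpa using isWord_gB.pow _)
  have hx : IsWord (gA ^ g.x) g.x.natAbs := .zpow_of_natAbs _ (by simpa using isWord_gA.pow _)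
  refine ⟨_, ?_, Nat.add_le_add_left hkz _⟩
  have := (hy.mul hx).mul (IsWord.zpow_of_natAbs _ hk)
  rwa [← eq_gB_zpow_mul] at this

lemma isWord_wordLen (g : DH) : IsWord g (wordLen g) := by
  obtain ⟨k, hk, -⟩ := exists_isWord g
  exact Nat.sInf_mem (s := {n | IsWord g n}) ⟨k, hk⟩

lemma wordLen_le_natAbs (g : DH) :
    wordLen g ≤ g.y.natAbs + g.x.natAbs + 16 * Nat.sqrt g.z.natAbs := by
  obtain ⟨k, hk, hkg⟩ := exists_isWord g
  exact hk.wordLen_le.trans hkg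

lemma wordLen_mul_le (g h : DH) : wordLen (g * h) ≤ wordLen g + wordLen h :=
  ((isWord_wordLen g).mul (isWord_wordLen h)).wordLen_le

lemma wordLen_inv (g : DH) : wordLen g⁻¹ = wordLen g :=
  le_antisymm (isWord_wordLen g).inv.wordLen_le
    (by simpa using (isWord_wordLen g⁻¹).inv.wordLen_le)

lemma wordLen_one : wordLen 1 = 0 := Nat.le_zero.1 isWord_one.wordLen_le

lemma mem_Ball {g : DH} {n : ℕ} : g ∈ Ball n ↔ wordLen g ≤ n := by
  simp [Ball, dW, wordLen_inv]

lemma dW_mul_right (g h : DH) : dW g (g * h) = wordLen h := by simp [dW]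

/-- Coordinates grow at most linearly (horizontal) and quadratically (vertical). -/
lemma IsWord.coord_le {g : DH} {n : ℕ} (h : IsWord g n) :
    |g.x| ≤ n ∧ |g.y| ≤ n ∧ |g.z| ≤ (n : ℤ) ^ 2 := by
  obtain ⟨l, rfl, hl, rfl⟩ := h
  induction l with
  | nil => simp [one_def]
  | cons s l ih =>
    obtain ⟨hx, hy, hz⟩ := ih fun t ht => hl t (List.mem_cons_of_mem _ ht)
    have hs := hl s List.mem_cons_self
    rw [abs_le] at *
    simp only [List.prod_cons, List.length_cons, mul_def]
    generalize l.prod = p at *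
    generalize (l.length : ℕ) = k at *
    push_cast
    simp only [abs_le] at *
    simp only [Set.mem_insert_iff, Set.mem_singleton_iff] at hs
    rcases hs with rfl | rfl | rfl | rfl <;> simp [gA, gB, inv_def] <;>
      refine ⟨⟨?_, ?_⟩, ⟨?_, ?_⟩, ?_, ?_⟩ <;> nlinarith

lemma le_sq_wordLen_gC_pow (m : ℕ) : (m : ℝ) ≤ (wordLen (gC ^ m) : ℝ) ^ 2 := by
  have h := (isWord_wordLen (gC ^ m)).coord_le.2.2
  generalize wordLen (gC ^ m) = k at *
  rw [gC_pow] at h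
  simp only [Nat.abs_cast] at h
  exact_mod_cast h

/-- A representation by isometries moves vectors at most linearly in the word length. -/
lemma norm_sub_representation_le {E : Type*} [NormedAddCommGroup E] [NormedSpace ℝ E]
    (ρ : Representation ℝ DH E) (hρ : ∀ g u, ‖ρ g u‖ = ‖u‖) (g : DH) (u : E) :
    ‖u - ρ g u‖ ≤ wordLen g * (‖u - ρ gA u‖ + ‖u - ρ gB u‖) := by
  obtain ⟨l, hn, hl, hg⟩ := isWord_wordLen g
  rw [← hn, ← hg]
  clear hn hg
  have hinv : ∀ s : DH, ‖u - ρ s⁻¹ u‖ = ‖u - ρ s u‖ := fun s => by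
    rw [← hρ s (u - ρ s⁻¹ u), map_sub, ← Module.End.mul_apply, ← map_mul, mul_inv_cancel, map_one,
      Module.End.one_apply, norm_sub_rev]
  induction l with
  | nil => simp
  | cons s l ih =>
    have ih' := ih fun t ht => hl t (List.mem_cons_of_mem _ ht)
    have hs := hl s List.mem_cons_self
    have hsle : ‖u - ρ s u‖ ≤ ‖u - ρ gA u‖ + ‖u - ρ gB u‖ := by
      simp only [Set.mem_insert_iff, Set.mem_singleton_iff] at hs
      have hA := norm_nonneg (u - ρ gA u)
      have hB := norm_nonneg (u - ρ gB u)
      rcases hs with rfl | rfl | rfl | rfl <;> (try rw [hinv]) <;> linarith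
    have h : u - ρ (s :: l).prod u = (u - ρ s u) + ρ s (u - ρ l.prod u) := by
      rw [List.prod_cons, map_mul, Module.End.mul_apply, map_sub]; abel
    rw [h]
    refine (norm_add_le _ _).trans ?_
    rw [hρ, List.length_cons]
    push_cast
    linarith

end DH

section Scales

lemma sum_le_of_scale_recursion {a e w : ℕ → ℝ} {M : ℝ} (ha0 : ∀ m, 0 ≤ a m) (haM : ∀ m, a m ≤ M)
    (hw0 : w 0 = 0) (hwn : ∀ m, 0 ≤ w m) (hw : ∀ m, √2 * w (m + 1) = w m + a m)
    (hrec : ∀ m, 32 * a (m + 10) ≤ 2 * w m + 2 ^ 28 * e m + 8 * a (m + 14)) (J : ℕ) :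
    19 * ∑ m ∈ Finset.range J, a m ≤ 432 * M + 2 ^ 28 * ∑ m ∈ Finset.range J, e m := by
  set S := ∑ m ∈ Finset.range J, a m with hS
  set W := ∑ m ∈ Finset.range J, w m with hW
  have hpart : ∀ n k, 0 ≤ ∑ m ∈ Finset.range k, a (n + m) ∧
      ∑ m ∈ Finset.range k, a (n + m) ≤ k * M := fun n k =>
    ⟨Finset.sum_nonneg fun m _ => ha0 _, by
      simpa using Finset.sum_le_sum fun m (_ : m ∈ Finset.range k) => haM (n + m)⟩
  have hshift : ∀ k, ∑ m ∈ Finset.range J, a (m + k)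
      = S + ∑ m ∈ Finset.range k, a (J + m) - ∑ m ∈ Finset.range k, a (0 + m) := fun k => by
    have h1 := Finset.sum_range_add a J k
    have h2 := Finset.sum_range_add a k J
    rw [add_comm k J, h1] at h2
    simp only [add_comm _ k, zero_add]
    linarith
  have hWS : W ≤ 5 / 2 * S := by
    have h1 : √2 * ∑ m ∈ Finset.range J, w (m + 1) = W + S := by
      rw [Finset.mul_sum, hW, hS, ← Finset.sum_add_distrib]
      exact Finset.sum_congr rfl fun m _ => hw m
    have h2 : ∑ m ∈ Finset.range J, w (m + 1) = W + w J := by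
      have h3 := Finset.sum_range_succ w J
      have h4 := Finset.sum_range_succ' w J
      rw [hw0, add_zero] at h4
      rw [← h4, h3]
    have h5 : (7 / 5 : ℝ) ≤ √2 := Real.le_sqrt_of_sq_le (by norm_num)
    have h6 : 0 ≤ W := Finset.sum_nonneg fun m _ => hwn m
    have h7 := hwn J
    rw [h2] at h1
    nlinarith
  have hsum := Finset.sum_le_sum fun m (_ : m ∈ Finset.range J) => hrec m
  simp only [Finset.sum_add_distrib, ← Finset.mul_sum] at hsum
  rw [hshift 10, hshift 14] at hsum
  have h1 := hpart J 10
  have h2 := hpart 0 10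
  have h3 := hpart J 14
  have h4 := hpart 0 14
  push_cast at h1 h2 h3 h4
  linarith [h1.1, h2.2, h3.2, h4.1]

lemma sum_le_of_sum_rpow_le {q κ B : ℝ} (hq : 1 ≤ q) (hκ : 0 < κ) (hB : 0 ≤ B) {x : ℕ → ℝ}
    (hx : ∀ m, 0 ≤ x m) {J : ℕ} (hJ : 0 < J)
    (h : κ * ∑ m ∈ Finset.range J, x m ^ q ≤ B ^ q) :
    ∑ m ∈ Finset.range J, x m ≤ J / (J : ℝ) ^ (1 / q) * κ⁻¹ ^ (1 / q) * B := by
  have hq0 : 0 < q := by linarith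
  have hJ' : (0 : ℝ) < J := by exact_mod_cast hJ
  have h1 := Real.rpow_sum_le_const_mul_sum_rpow (Finset.range J) x hq
  simp only [abs_of_nonneg (hx _), Finset.card_range] at h1
  have hS : 0 ≤ ∑ m ∈ Finset.range J, x m := Finset.sum_nonneg fun m _ => hx m
  refine (Real.rpow_le_rpow_iff hS (by positivity) hq0).1 (h1.trans ?_)
  rw [Real.mul_rpow (by positivity) hB, Real.mul_rpow (by positivity) (by positivity),
    Real.div_rpow (by positivity) (by positivity), ← Real.rpow_mul hJ'.le,
    ← Real.rpow_mul (by positivity), one_div_mul_cancel hq0.ne', Real.rpow_one, Real.rpow_one,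
    Real.rpow_sub_one hJ'.ne', mul_assoc]
  gcongr
  rwa [le_inv_mul_iff₀ hκ]

end Scales

namespace DH

lemma sqrt_two_pow (m : ℕ) : √2 ^ m = √(2 ^ m) := by
  induction m with
  | zero => simp
  | succ m ih => rw [pow_succ, pow_succ, Real.sqrt_mul (by positivity), ih]

/-- Vertical increments at `J` consecutive dyadic scales cannot all be comparable to the
horizontal gradient in a `q`-uniformly convex isometric representation. -/
theorem rpow_mul_le_of_vertical_lower_bound {q κ : ℝ} (hq : 1 ≤ q) (hκ : 0 < κ)
    {E : Type*} [NormedAddCommGroup E] [NormedSpace ℝ E] (hE : TwoPointConvex E q κ)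
    (ρ : Representation ℝ DH E) (hρ : ∀ g u, ‖ρ g u‖ = ‖u‖) (F : E) {J : ℕ} (hJ : 0 < J) {L : ℝ}
    (hL : ∀ j < J, L * √2 ^ j ≤ ‖F - ρ (gC ^ 2 ^ j) F‖) :
    (J : ℝ) ^ (1 / q) * L ≤
      (6912 + 2 ^ 29 * κ⁻¹ ^ (1 / q)) * (‖F - ρ gA F‖ + ‖F - ρ gB F‖) := by
  set T := ρ gC with hT
  have hTn : ∀ u, ‖T u‖ = ‖u‖ := hρ gC
  have hTpow : ∀ m, T ^ m = ρ (gC ^ m) := fun m => (map_pow ρ gC m).symm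
  set B := ‖F - ρ gA F‖ + ‖F - ρ gB F‖ with hB
  have hB0 : 0 ≤ B := by positivity
  have hR : 0 < √2 := by positivity
  have hvert : ∀ (m : ℕ) (u : E), ‖u - (T ^ 2 ^ m) u‖
      ≤ 16 * √2 ^ m * (‖u - ρ gA u‖ + ‖u - ρ gB u‖) := fun m u => by
    rw [hTpow]
    refine (norm_sub_representation_le ρ hρ _ u).trans ?_
    gcongr
    have h1 : (wordLen (gC ^ 2 ^ m) : ℝ) ≤ 16 * (Nat.sqrt (2 ^ m) : ℝ) := by
      exact_mod_cast wordLen_gC_pow_le (2 ^ m)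
    have h2 := Real.nat_sqrt_le_real_sqrt (a := 2 ^ m)
    push_cast at h2
    rw [sqrt_two_pow]
    linarith
  let v : ℕ → E := fun m => dyadicAvg T m (F - (T ^ 2 ^ m) F)
  let ex : DH → ℕ → ℝ := fun s m =>
    ‖dyadicAvg T m ((F - ρ s F) - (T ^ 2 ^ m) (F - ρ s F))‖
  have hcomm : ∀ s m, v m - ρ s (v m)
      = dyadicAvg T m ((F - ρ s F) - (T ^ 2 ^ m) (F - ρ s F)) := fun s m => by
    have hc : Commute (ρ s) T := (commute_gC s).map ρ
    have h1 : ∀ u, ρ s (dyadicAvg T m u) = dyadicAvg T m (ρ s u) := fun u =>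
      LinearMap.congr_fun (commute_dyadicAvg hc m).eq u
    have h2 : ∀ u, ρ s ((T ^ 2 ^ m) u) = (T ^ 2 ^ m) (ρ s u) := fun u =>
      LinearMap.congr_fun (hc.pow_right (2 ^ m)).eq u
    simp only [v, h1, h2, map_sub]
    abel
  have hex : ∀ s, ‖F - ρ s F‖ ≤ B → ∑ m ∈ Finset.range J, ex s m
      ≤ J / (J : ℝ) ^ (1 / q) * κ⁻¹ ^ (1 / q) * B := fun s hs =>
    sum_le_of_sum_rpow_le hq hκ hB0 (fun m => norm_nonneg _) hJ
      ((hE.sum_norm_dyadicAvg_le hTn J (F - ρ s F)).trans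
        (Real.rpow_le_rpow (norm_nonneg _) hs (by linarith)))
  have hexA := hex gA (le_add_of_nonneg_right (norm_nonneg _))
  have hexB := hex gB (le_add_of_nonneg_left (norm_nonneg _))
  let a : ℕ → ℝ := fun m => ‖F - (T ^ 2 ^ m) F‖ / √2 ^ m
  let w : ℕ → ℝ := fun m => (∑ l ∈ Finset.range m, ‖F - (T ^ 2 ^ l) F‖) / √2 ^ m
  have hscale := sum_le_of_scale_recursion (a := a) (w := w) (e := fun m => ex gA m + ex gB m)
    (M := 16 * B) (fun m => by positivity)
    (fun m => by
      rw [div_le_iff₀ (by positivity)]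
      linarith [hvert m F])
    (by simp [w]) (fun m => by positivity)
    (fun m => by
      simp only [w, a, Finset.sum_range_succ, pow_succ]
      field_simp)
    (fun m => by
      have h1 := norm_sub_pow_two_pow_le hTn m 10 14 F (v := v m) rfl
      have h2 := hvert m (v m)
      rw [hcomm, hcomm] at h2
      change _ ≤ _ * (ex gA m + ex gB m) at h2
      have hs : √2 ^ 2 = 2 := Real.sq_sqrt (by norm_num)
      have h10 : √2 ^ (m + 10) = 32 * √2 ^ m := by
        rw [pow_add, show (10 : ℕ) = 2 * 5 from rfl, pow_mul, hs]; ring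
      have h14 : √2 ^ (m + 14) = 128 * √2 ^ m := by
        rw [pow_add, show (14 : ℕ) = 2 * 7 from rfl, pow_mul, hs]; ring
      simp only [a, w, h10, h14]
      have hp : 0 < √2 ^ m := by positivity
      generalize √2 ^ m = r at *
      have h3 : ‖F - (T ^ 2 ^ (m + 10)) F‖
          ≤ 2 * ∑ l ∈ Finset.range m, ‖F - (T ^ 2 ^ l) F‖
            + 2 ^ 28 * (ex gA m + ex gB m) * r + ‖F - (T ^ 2 ^ (m + 14)) F‖ / 16 := by
        linarith
      have h4 := div_le_div_of_nonneg_right h3 hp.le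
      refine le_trans (le_of_eq ?_) (h4.trans (le_of_eq ?_)) <;> field_simp
      ring)
    J
  rw [Finset.sum_add_distrib] at hscale
  have hlow : J * L ≤ ∑ m ∈ Finset.range J, a m := by
    have := Finset.sum_le_sum (s := Finset.range J) (f := fun _ => L) (g := a) fun m hm => by
      rw [le_div_iff₀ (by positivity), hTpow]
      exact hL m (Finset.mem_range.1 hm)
    simpa using this
  have hJ1 : (1 : ℝ) ≤ J := by exact_mod_cast hJ
  set P := (J : ℝ) ^ (1 / q) with hP
  have hP0 : 0 < P := Real.rpow_pos_of_pos (by linarith) _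
  have hPJ : P ≤ J := by
    calc P ≤ (J : ℝ) ^ (1 : ℝ) :=
          Real.rpow_le_rpow_of_exponent_le hJ1 (by rw [div_le_one (by linarith)]; exact hq)
      _ = J := Real.rpow_one _
  set y := κ⁻¹ ^ (1 / q) with hy
  have hy0 : 0 ≤ y := by positivity
  have h1 : 19 * (J * L) ≤ J / P * ((6912 + 2 ^ 29 * y) * B) := by
    have h2 : 1 ≤ J / P := (one_le_div hP0).2 hPJ
    have h3 : B ≤ J / P * B := le_mul_of_one_le_left hB0 h2
    linarith
  have h4 : 19 * (P * L) ≤ (6912 + 2 ^ 29 * y) * B := by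
    have h5 := mul_le_mul_of_nonneg_left h1 (by positivity : 0 ≤ P / J)
    have h6 : P / J * (19 * (J * L)) = 19 * (P * L) := by field_simp
    have h7 : P / J * (J / P * ((6912 + 2 ^ 29 * y) * B)) = (6912 + 2 ^ 29 * y) * B := by
      field_simp
    rwa [h6, h7] at h5
  have h8 : 0 ≤ (6912 + 2 ^ 29 * y) * B := by positivity
  linarith

end DH

section RegularRepresentation

variable {G : Type*} [Group G] {X : Type*} [NormedAddCommGroup X] {p : ENNReal}

lemma memℓp_comp_mul_right (hp : 0 < p.toReal) {f : G → X} (hf : Memℓp f p) (g : G) :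
    Memℓp (fun x => f (x * g)) p := by
  rw [memℓp_gen_iff hp] at hf ⊢
  exact (Equiv.mulRight g).summable_iff.2 hf

lemma lp_norm_rpow_le_of_support {ι : Type*} (hp : 0 < p.toReal) (u : lp (fun _ : ι => X) p)
    (s : Finset ι) (hs : ∀ i ∉ s, u i = 0) {c : ℝ} (hc : ∀ i, ‖u i‖ ≤ c) :
    ‖u‖ ^ p.toReal ≤ s.card * c ^ p.toReal := by
  rw [lp.norm_rpow_eq_tsum hp, tsum_eq_sum (s := s) fun i hi => by
    rw [hs i hi, norm_zero, Real.zero_rpow hp.ne'], ← nsmul_eq_mul]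
  exact Finset.sum_le_card_nsmul _ _ _ fun i _ =>
    Real.rpow_le_rpow (norm_nonneg _) (hc i) hp.le

lemma le_lp_norm_rpow_of_forall_mem {ι : Type*} (hp : 0 < p.toReal) (u : lp (fun _ : ι => X) p)
    (s : Finset ι) {c : ℝ} (hc0 : 0 ≤ c) (hc : ∀ i ∈ s, c ≤ ‖u i‖) :
    s.card * c ^ p.toReal ≤ ‖u‖ ^ p.toReal := by
  refine le_trans ?_ (lp.sum_rpow_le_norm_rpow hp u s)
  rw [← nsmul_eq_mul]
  exact Finset.card_nsmul_le_sum _ _ _ fun i hi => Real.rpow_le_rpow hc0 (hc i hi) hp.le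

variable [NormedSpace ℝ X] [Fact (1 ≤ p)]

/-- The right regular representation on `ℓᵖ(G; X)`. -/
noncomputable def rightRegular (G X : Type*) [Group G] [NormedAddCommGroup X] [NormedSpace ℝ X]
    {p : ENNReal} [Fact (1 ≤ p)] (hp : 0 < p.toReal) :
    Representation ℝ G (lp (fun _ : G => X) p) where
  toFun g :=
    { toFun := fun f => ⟨fun x => f (x * g), memℓp_comp_mul_right hp (lp.memℓp f) g⟩
      map_add' := fun _ _ => rfl
      map_smul' := fun _ _ => rfl }
  map_one' := by
    ext f x
    simp
  map_mul' g h := by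
    ext f x
    exact congrArg f (mul_assoc x g h).symm

lemma norm_rightRegular (hp : 0 < p.toReal) (g : G) (f : lp (fun _ : G => X) p) :
    ‖rightRegular G X hp g f‖ = ‖f‖ := by
  rw [lp.norm_eq_tsum_rpow hp, lp.norm_eq_tsum_rpow hp]
  congr 1
  exact (Equiv.mulRight g).tsum_eq fun x => ‖f x‖ ^ p.toReal

lemma twoPointConvex_lp {ι : Type*} {κ : ℝ} (hp : 0 < p.toReal)
    (hX : TwoPointConvex X p.toReal κ) :
    TwoPointConvex (lp (fun _ : ι => X) p) p.toReal κ := by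
  intro u v
  simp only [lp.norm_rpow_eq_tsum hp]
  have hs : ∀ w : lp (fun _ : ι => X) p, Summable fun i => ‖w i‖ ^ p.toReal := fun w =>
    (lp.memℓp w).summable hp
  rw [← tsum_mul_left, ← (hs _).tsum_add ((hs _).mul_left κ), ← (hs u).tsum_add (hs v),
    ← tsum_div_const]
  exact ((hs _).add ((hs _).mul_left κ)).tsum_le_tsum (fun i => hX (u i) (v i))
    (((hs u).add (hs v)).div_const 2)

end RegularRepresentation

namespace DH

/-- The box of elements with horizontal coordinates at most `R` and vertical coordinate at most
`R ^ 2` in absolute value. -/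
noncomputable def coordBox (R : ℕ) : Finset DH :=
  (Finset.Icc (-R : ℤ) R ×ˢ Finset.Icc (-R : ℤ) R ×ˢ Finset.Icc (-(R : ℤ) ^ 2) (R ^ 2)).map
    ⟨fun t => ⟨t.1, t.2.1, t.2.2⟩, fun s t h => by
      simp only [mk.injEq] at h
      exact Prod.ext h.1 (Prod.ext h.2.1 h.2.2)⟩

lemma mem_coordBox {R : ℕ} {g : DH} :
    g ∈ coordBox R ↔ |g.x| ≤ R ∧ |g.y| ≤ R ∧ |g.z| ≤ (R : ℤ) ^ 2 := by
  simp only [coordBox, Finset.mem_map, Finset.mem_product, Finset.mem_Icc, abs_le]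
  constructor
  · rintro ⟨t, h, rfl⟩
    exact h
  · intro h
    exact ⟨(g.x, g.y, g.z), h, rfl⟩

lemma card_coordBox (R : ℕ) : (coordBox R).card = (2 * R + 1) ^ 2 * (2 * R ^ 2 + 1) := by
  simp only [coordBox, Finset.card_map, Finset.card_product, Int.card_Icc]
  have h1 : ((R : ℤ) + 1 - -R).toNat = 2 * R + 1 := by omega
  have h2 : ((R : ℤ) ^ 2 + 1 - -(R : ℤ) ^ 2).toNat = 2 * R ^ 2 + 1 := by
    have : ((R ^ 2 : ℕ) : ℤ) = (R : ℤ) ^ 2 := by push_cast; rfl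
    rw [← this]
    omega
  rw [h1, h2]
  ring

lemma card_coordBox_mul_le (k R : ℕ) (hk : 1 ≤ k) :
    (coordBox (k * R)).card ≤ k ^ 4 * (coordBox R).card := by
  rw [card_coordBox, card_coordBox]
  have h1 : 2 * (k * R) + 1 ≤ k * (2 * R + 1) := by nlinarith
  have h2 : 2 * (k * R) ^ 2 + 1 ≤ k ^ 2 * (2 * R ^ 2 + 1) := by nlinarith
  calc (2 * (k * R) + 1) ^ 2 * (2 * (k * R) ^ 2 + 1)
      ≤ (k * (2 * R + 1)) ^ 2 * (k ^ 2 * (2 * R ^ 2 + 1)) := by gcongr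
    _ = _ := by ring

lemma mem_coordBox_of_wordLen_le {R : ℕ} {g : DH} (h : wordLen g ≤ R) : g ∈ coordBox R := by
  have h' : (wordLen g : ℤ) ≤ R := by exact_mod_cast h
  obtain ⟨hx, hy, hz⟩ := (isWord_wordLen g).coord_le
  exact mem_coordBox.2 ⟨hx.trans h', hy.trans h', hz.trans (by gcongr)⟩

lemma wordLen_le_of_mem_coordBox {R : ℕ} {g : DH} (h : g ∈ coordBox R) :
    wordLen g ≤ 18 * R := by
  obtain ⟨hx, hy, hz⟩ := mem_coordBox.1 h
  have h1 := wordLen_le_natAbs g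
  have h2 : Nat.sqrt g.z.natAbs ≤ R := by
    rw [← Nat.sqrt_eq' R]
    refine Nat.sqrt_le_sqrt ?_
    zify
    exact hz
  have h3 : g.x.natAbs ≤ R := by zify; exact hx
  have h4 : g.y.natAbs ≤ R := by zify; exact hy
  omega

variable {X : Type*} [NormedAddCommGroup X] [NormedSpace ℝ X]

/-- The function `1` on `[0, N]`, `0` on `[2N, ∞)`, and affine in between. -/
noncomputable def cutoff (N k : ℕ) : ℝ := max 0 (min 1 (2 - k / N))

lemma cutoff_nonneg (N k : ℕ) : 0 ≤ cutoff N k := le_max_left _ _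

lemma cutoff_le_one (N k : ℕ) : cutoff N k ≤ 1 := max_le zero_le_one (min_le_left _ _)

lemma cutoff_eq_one {N k : ℕ} (hN : 0 < N) (h : k ≤ N) : cutoff N k = 1 := by
  have h' : (k : ℝ) / N ≤ 1 := (div_le_one (by exact_mod_cast hN)).2 (by exact_mod_cast h)
  rw [cutoff, min_eq_left (by linarith), max_eq_right zero_le_one]

lemma cutoff_eq_zero {N k : ℕ} (hN : 0 < N) (h : 2 * N ≤ k) : cutoff N k = 0 := by
  have h' : (2 : ℝ) ≤ k / N := by
    rw [le_div_iff₀ (by exact_mod_cast hN)]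
    exact_mod_cast h
  exact max_eq_left ((min_le_right _ _).trans (by linarith))

lemma abs_cutoff_sub_le (N k l : ℕ) : |cutoff N k - cutoff N l| ≤ |(k : ℝ) - l| / N := by
  refine (abs_max_sub_max_le_max _ _ _ _).trans ?_
  rw [sub_self, abs_zero, max_eq_right (abs_nonneg _)]
  refine (abs_min_sub_min_le_max _ _ _ _).trans ?_
  rw [sub_self, abs_zero, max_eq_right (abs_nonneg _)]
  have h : (2 - k / N - (2 - l / N) : ℝ) = (l - k) / N := by ring
  rw [h, abs_div, abs_sub_comm, Nat.abs_cast]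

/-- A map on the Heisenberg group, centered at the identity and cut off at radius `2N`. -/
noncomputable def cutoffMap (N : ℕ) (f : DH → X) (p : DH) : X :=
  cutoff N (wordLen p) • (f p - f 1)

lemma cutoffMap_eq_zero {N : ℕ} (hN : 0 < N) (f : DH → X) {p : DH} (hp : 2 * N ≤ wordLen p) :
    cutoffMap N f p = 0 := by
  rw [cutoffMap, cutoff_eq_zero hN hp, zero_smul]

lemma cutoffMap_sub_eq_zero {N : ℕ} (hN : 0 < N) (f : DH → X) {p s : DH} (hs : wordLen s ≤ 1)
    (hp : 2 * N < wordLen p) : cutoffMap N f p - cutoffMap N f (p * s) = 0 := by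
  have h := wordLen_mul_le (p * s) s⁻¹
  rw [mul_inv_cancel_right, wordLen_inv] at h
  rw [cutoffMap_eq_zero hN f hp.le, cutoffMap_eq_zero hN f (by omega), sub_zero]

lemma norm_cutoffMap_sub_le {N n : ℕ} (hN : 0 < N) (hn : 2 * N + 1 ≤ n) {D : ℝ} (hD : 0 ≤ D)
    {f : DH → X} (hf : ∀ x ∈ Ball n, ∀ y ∈ Ball n, ‖f x - f y‖ ≤ D * (dW x y : ℝ))
    {s : DH} (hs : wordLen s ≤ 1) (p : DH) :
    ‖cutoffMap N f p - cutoffMap N f (p * s)‖ ≤ 4 * D := by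
  rcases lt_or_ge (2 * N) (wordLen p) with hp | hp
  · rw [cutoffMap_sub_eq_zero hN f hs hp, norm_zero]
    positivity
  have hps := wordLen_mul_le p s
  have hsp := wordLen_mul_le (p * s) s⁻¹
  rw [mul_inv_cancel_right, wordLen_inv] at hsp
  have hpn : p ∈ Ball n := mem_Ball.2 (by omega)
  have hpsn : p * s ∈ Ball n := mem_Ball.2 (by omega)
  have h1n : (1 : DH) ∈ Ball n := mem_Ball.2 (by rw [wordLen_one]; omega)
  have h1 : ‖f p - f (p * s)‖ ≤ D := by
    refine (hf p hpn _ hpsn).trans (mul_le_of_le_one_right hD ?_)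
    rw [dW_mul_right]
    exact_mod_cast hs
  have h2 : ‖f (p * s) - f 1‖ ≤ D * (2 * N + 1) := by
    refine (hf _ hpsn 1 h1n).trans (mul_le_mul_of_nonneg_left ?_ hD)
    have : dW (p * s) 1 ≤ 2 * N + 1 := by
      rw [dW, mul_one, wordLen_inv]; omega
    exact_mod_cast this
  have hN' : (1 : ℝ) ≤ N := by exact_mod_cast hN
  have h3 : |cutoff N (wordLen p) - cutoff N (wordLen (p * s))| ≤ 1 / N := by
    refine (abs_cutoff_sub_le _ _ _).trans ?_
    gcongr
    rw [abs_le]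
    have e1 : (wordLen p : ℝ) ≤ wordLen (p * s) + 1 := by exact_mod_cast (by omega)
    have e2 : (wordLen (p * s) : ℝ) ≤ wordLen p + 1 := by exact_mod_cast (by omega)
    constructor <;> linarith
  have hdec : cutoffMap N f p - cutoffMap N f (p * s)
      = cutoff N (wordLen p) • (f p - f (p * s))
        + (cutoff N (wordLen p) - cutoff N (wordLen (p * s))) • (f (p * s) - f 1) := by
    simp only [cutoffMap]; module
  rw [hdec]
  refine (norm_add_le _ _).trans ?_
  rw [norm_smul, norm_smul, Real.norm_of_nonneg (cutoff_nonneg _ _), Real.norm_eq_abs]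
  calc _ ≤ 1 * D + 1 / N * (D * (2 * N + 1)) := by
        gcongr
        exact cutoff_le_one _ _
    _ = 3 * D + D / N := by field_simp; ring
    _ ≤ 4 * D := by linarith [div_le_self hD hN']

/-- A bi-Lipschitz embedding of a ball of radius at least `72 * 2 ^ J + 1` into a `q`-uniformly
convex space has distortion at least a multiple of `J ^ (1 / q)`. -/
theorem rpow_le_of_twoPointConvex {q κ : ℝ} (hq : 1 ≤ q) (hκ : 0 < κ)
    (hX : TwoPointConvex X q κ) {J n : ℕ} (hJ : 0 < J) (hn : 72 * 2 ^ J + 1 ≤ n) {D : ℝ}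
    (hD : 0 ≤ D) {f : DH → X} (hf : ∀ x ∈ Ball n, ∀ y ∈ Ball n,
      (dW x y : ℝ) ≤ ‖f x - f y‖ ∧ ‖f x - f y‖ ≤ D * (dW x y : ℝ)) :
    (J : ℝ) ^ (1 / q) ≤ (6912 + 2 ^ 29 * κ⁻¹ ^ (1 / q)) * (8 * 72 ^ 4) * D := by
  have hq0 : 0 < q := by linarith
  set p : ENNReal := ENNReal.ofReal q
  have hpq : p.toReal = q := ENNReal.toReal_ofReal hq0.le
  have hp : 0 < p.toReal := hpq ▸ hq0
  have : Fact (1 ≤ p) := ⟨by simpa [p] using hq⟩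
  set m := 2 ^ J with hm
  have hm1 : 1 ≤ m := Nat.one_le_two_pow
  have hN : 0 < 36 * m := by omega
  have hmem : Memℓp (cutoffMap (36 * m) f) p := by
    refine memℓp_gen (summable_of_ne_finset_zero (s := coordBox (72 * m)) fun g hg => ?_)
    have : ¬ wordLen g ≤ 72 * m := fun h => hg (mem_coordBox_of_wordLen_le h)
    rw [cutoffMap_eq_zero hN f (by omega), norm_zero, Real.zero_rpow hp.ne']
  let F : lp (fun _ : DH => X) p := ⟨cutoffMap (36 * m) f, hmem⟩
  let ρ := rightRegular DH X hp
  have hFρ : ∀ g x, (F - ρ g F) x = cutoffMap (36 * m) f x - cutoffMap (36 * m) f (x * g) :=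
    fun _ _ => rfl
  set b : ℝ := ((coordBox m).card : ℝ) with hb
  have hb0 : 0 < b := by
    rw [hb, card_coordBox]; positivity
  have hgrad : ∀ s, wordLen s ≤ 1 → ‖F - ρ s F‖ ≤ b ^ (1 / q) * (4 * 72 ^ 4 * D) := by
    intro s hs
    have h1 := lp_norm_rpow_le_of_support hp (F - ρ s F) (coordBox (72 * m)) (fun g hg => by
      have : ¬ wordLen g ≤ 72 * m := fun h => hg (mem_coordBox_of_wordLen_le h)
      rw [hFρ, cutoffMap_sub_eq_zero hN f hs (by omega)]) (c := 4 * D) (fun g => by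
      rw [hFρ]
      exact norm_cutoffMap_sub_le hN (by omega) hD (fun x hx y hy => (hf x hx y hy).2) hs g)
    rw [hpq] at h1
    have h2 : ((coordBox (72 * m)).card : ℝ) ≤ 72 ^ 4 * b := by
      rw [hb]
      exact_mod_cast card_coordBox_mul_le 72 m (by norm_num)
    refine (Real.rpow_le_rpow_iff (norm_nonneg _) (by positivity) hq0).1 (h1.trans ?_)
    rw [Real.mul_rpow (x := b ^ (1 / q)) (by positivity) (by positivity), ← Real.rpow_mul hb0.le,
      one_div_mul_cancel hq0.ne', Real.rpow_one,
      show 4 * 72 ^ 4 * D = 72 ^ 4 * (4 * D) by ring,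
      Real.mul_rpow (x := 72 ^ 4) (by positivity) (by positivity)]
    have h3 : (72 ^ 4 : ℝ) ≤ (72 ^ 4 : ℝ) ^ q := by
      conv_lhs => rw [← Real.rpow_one (72 ^ 4 : ℝ)]
      exact Real.rpow_le_rpow_of_exponent_le (by norm_num) hq
    calc _ ≤ (72 ^ 4 * b) * (4 * D) ^ q := by gcongr
      _ = b * (72 ^ 4 * (4 * D) ^ q) := by ring
      _ ≤ _ := by gcongr
  have hvert : ∀ j < J, b ^ (1 / q) * √2 ^ j ≤ ‖F - ρ (gC ^ 2 ^ j) F‖ := by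
    intro j hj
    have hlen : wordLen (gC ^ 2 ^ j) ≤ 16 * m := by
      refine (wordLen_gC_pow_le _).trans (Nat.mul_le_mul_left _ ?_)
      exact (Nat.sqrt_le_self _).trans (Nat.pow_le_pow_right (by norm_num) hj.le)
    have h1 := le_lp_norm_rpow_of_forall_mem hp (F - ρ (gC ^ 2 ^ j) F) (coordBox m)
      (c := √2 ^ j) (by positivity) (fun g hg => by
        have hg' := wordLen_le_of_mem_coordBox hg
        have hgc := wordLen_mul_le g (gC ^ 2 ^ j)
        rw [hFρ, cutoffMap, cutoffMap, cutoff_eq_one hN (by omega), cutoff_eq_one hN (by omega),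
          one_smul, one_smul, sub_sub_sub_cancel_right]
        refine le_trans ?_ (hf g (mem_Ball.2 (by omega)) _ (mem_Ball.2 (by omega))).1
        rw [dW_mul_right, sqrt_two_pow]
        refine Real.sqrt_le_iff.2 ⟨by positivity, ?_⟩
        exact_mod_cast le_sq_wordLen_gC_pow (2 ^ j))
    rw [hpq] at h1
    refine (Real.rpow_le_rpow_iff (by positivity) (norm_nonneg _) hq0).1 (le_trans (le_of_eq ?_) h1)
    rw [Real.mul_rpow (by positivity) (by positivity), ← Real.rpow_mul hb0.le,
      one_div_mul_cancel hq0.ne', Real.rpow_one]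
  have hE : TwoPointConvex (lp (fun _ : DH => X) p) q κ := by
    have := twoPointConvex_lp (ι := DH) (X := X) (κ := κ) hp (by rwa [hpq])
    rwa [hpq] at this
  have hmain := rpow_mul_le_of_vertical_lower_bound hq hκ hE ρ (norm_rightRegular hp) F hJ hvert
  have hA := hgrad gA isWord_gA.wordLen_le
  have hB := hgrad gB isWord_gB.wordLen_le
  have hbq : 0 < b ^ (1 / q) := Real.rpow_pos_of_pos hb0 _
  refine le_of_mul_le_mul_right (hmain.trans ?_) hbq
  calc _ ≤ (6912 + 2 ^ 29 * κ⁻¹ ^ (1 / q)) * (b ^ (1 / q) * (4 * 72 ^ 4 * D)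
        + b ^ (1 / q) * (4 * 72 ^ 4 * D)) := by gcongr
    _ = _ := by ring

end DH

open DH in
/-- Corollary 1.2: sharp nonembeddability of balls in the discrete Heisenberg group
into Banach spaces with modulus of uniform convexity of power type `q`. -/
theorem distortion_lower_bound_uniformly_convex (η : ℝ) (hη : η ∈ Set.Ioo (0 : ℝ) 1)
    (q : ℝ) (hq : 2 ≤ q) :
    ∃ K : ℝ, 0 < K ∧
      ∀ (X : Type) [NormedAddCommGroup X] [NormedSpace ℝ X] [CompleteSpace X],
        (∀ ε ∈ Set.Ioo (0 : ℝ) 1, ∀ x y : X, ‖x‖ = 1 → ‖y‖ = 1 → ε ≤ ‖x - y‖ →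
          ‖x + y‖ ≤ 2 * (1 - (η * ε) ^ q)) →
        ∀ n : ℕ, 2 ≤ n → ∀ D : ℝ, 1 ≤ D → ∀ f : DH → X,
          (∀ x ∈ Ball n, ∀ y ∈ Ball n,
            (dW x y : ℝ) ≤ ‖f x - f y‖ ∧ ‖f x - f y‖ ≤ D * (dW x y : ℝ)) →
          K * Real.log n ^ (1 / q) ≤ D := by
  obtain ⟨hη0, hη1⟩ := hη
  have hq0 : 0 < q := by linarith
  set κ := (η / 8) ^ q with hκ
  have hκ0 : 0 < κ := by positivity
  set C := (6912 + 2 ^ 29 * κ⁻¹ ^ (1 / q)) * (8 * 72 ^ 4) with hC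
  have hC1 : 1 ≤ C := by
    have : 0 ≤ κ⁻¹ ^ (1 / q) := by positivity
    linarith
  refine ⟨(9 * C)⁻¹, by positivity, ?_⟩
  intro X _ _ _ hX n hn D hD f hf
  rw [inv_mul_le_iff₀ (by positivity)]
  have hpow : ∀ c : ℝ, 1 ≤ c → c ^ (1 / q) ≤ c := fun c hc => by
    conv_rhs => rw [← Real.rpow_one c]
    exact Real.rpow_le_rpow_of_exponent_le hc (by rw [div_le_one hq0]; linarith)
  have hlog0 : 0 ≤ Real.log n := Real.log_natCast_nonneg n
  have hlog : Real.log n ≤ Nat.log 2 n + 1 := by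
    have h1 : (n : ℝ) ≤ 2 ^ (Nat.log 2 n + 1) := by
      exact_mod_cast (Nat.lt_pow_succ_log_self (by norm_num) n).le
    have h2 := Real.log_le_log (by positivity) h1
    rw [Real.log_pow] at h2
    have h3 := Real.log_two_lt_d9
    push_cast at h2
    nlinarith [(Nat.cast_nonneg (Nat.log 2 n) : (0 : ℝ) ≤ _)]
  rcases le_or_gt (Nat.log 2 n) 7 with hsmall | hlarge
  · have h1 : (Nat.log 2 n : ℝ) ≤ 7 := by exact_mod_cast hsmall
    have h2 : Real.log n ^ (1 / q) ≤ 8 := (Real.rpow_le_rpow hlog0 (by linarith)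
      (by positivity)).trans (hpow 8 (by norm_num))
    nlinarith
  · obtain ⟨J, hJ⟩ := Nat.exists_eq_add_of_lt hlarge
    have hJn : 72 * 2 ^ (J + 1) + 1 ≤ n := by
      have h1 := Nat.pow_log_le_self 2 (by omega : n ≠ 0)
      rw [hJ, show 7 + J + 1 = (J + 1) + 7 by ring, pow_add] at h1
      have h2 : 1 ≤ 2 ^ (J + 1) := Nat.one_le_two_pow
      omega
    have hmain := rpow_le_of_twoPointConvex (by linarith) hκ0
      (twoPointConvex_of_modulus ⟨hη0, hη1⟩ hq hX) J.succ_pos hJn (by linarith) hf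
    rw [hJ] at hlog
    push_cast at hlog hmain
    have h1 : Real.log n ≤ 9 * ((J : ℝ) + 1) := by
      linarith [(Nat.cast_nonneg J : (0 : ℝ) ≤ _)]
    calc Real.log n ^ (1 / q) ≤ (9 * ((J : ℝ) + 1)) ^ (1 / q) := by gcongr
      _ = 9 ^ (1 / q) * ((J : ℝ) + 1) ^ (1 / q) := Real.mul_rpow (by norm_num) (by positivity)
      _ ≤ 9 * (C * D) := by
        gcongr
        exact hpow 9 (by norm_num)
      _ = 9 * C * D := by ring
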